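/- Every 2×2 integer matrix A with determinant 1 can be written in the form A = M(a_1, ..., a_n) for some n ≥ 1 and some positive integers a_1, ..., a_n. Equivalently, every element of SL(2, ℤ) equals T^{a_n} S T^{a_{n−1}} S ⋯ T^{a_1} S for suitable positive integers a_i, where S = [[0, −1], [1, 0]] and T = [[1, 1], [0, 1]]. -/

import Mathlib

open Matrix

def elemMat (a : ℤ) : Matrix (Fin 2) (Fin 2) ℤ := !![a, -1; 1, 0]

/-- `M (a₁ :: ... :: aₙ)` is the product `E(aₙ) ⋯ E(a₁)` with the factor for `a₁` rightmost. -/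
def M : List ℤ → Matrix (Fin 2) (Fin 2) ℤ
  | [] => 1
  | a :: t => M t * elemMat a

theorem M_append (l₁ l₂ : List ℤ) : M (l₁ ++ l₂) = M l₂ * M l₁ := by
  induction l₁ with
  | nil => simp [M]
  | cons a t ih => simp [M, ih, Matrix.mul_assoc]

def Good (A : Matrix (Fin 2) (Fin 2) ℤ) : Prop :=
  ∃ l : List ℤ, l ≠ [] ∧ (∀ x ∈ l, 0 < x) ∧ M l = A

theorem Good.mul {A B : Matrix (Fin 2) (Fin 2) ℤ} (hA : Good A) (hB : Good B) :
    Good (A * B) := by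
  obtain ⟨l, h1, h2, rfl⟩ := hA
  obtain ⟨k, _, h4, rfl⟩ := hB
  refine ⟨k ++ l, by simp [h1], ?_, M_append k l⟩
  intro x hx
  rcases List.mem_append.1 hx with h | h
  exacts [h4 x h, h2 x h]

theorem good_one : Good 1 :=
  ⟨[1, 1, 1, 1, 1, 1], by simp, by simp, by
    simp [M, elemMat, Matrix.one_fin_two]⟩

theorem good_T : Good !![1, 1; 0, 1] :=
  ⟨[1, 1, 1, 1, 1, 2], by simp, by simp, by simp [M, elemMat]⟩

theorem good_S : Good !![0, -1; 1, 0] :=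
  ⟨[1, 1, 1, 1, 1, 2, 1, 1], by simp, by simp, by simp [M, elemMat]⟩

theorem good_S_inv : Good !![0, 1; -1, 0] := by
  have h := (good_S.mul good_S).mul good_S
  simpa using h

theorem good_T_inv : Good !![1, -1; 0, 1] := by
  have h : Good !![0, 1; -1, 1] :=
    ⟨[1, 1, 1, 1, 1], by simp, by simp, by simp [M, elemMat]⟩
  simpa using good_S.mul h

theorem good_SL (g : SpecialLinearGroup (Fin 2) ℤ) :
    Good (g : Matrix (Fin 2) (Fin 2) ℤ) ∧
      Good ((g⁻¹ : SpecialLinearGroup (Fin 2) ℤ) : Matrix (Fin 2) (Fin 2) ℤ) := by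
  have hg : g ∈ Subgroup.closure {ModularGroup.S, ModularGroup.T} := by
    rw [SpecialLinearGroup.SL2Z_generators]; trivial
  induction hg using Subgroup.closure_induction with
  | mem x hx =>
    rcases hx with rfl | rfl
    · refine ⟨good_S, ?_⟩
      rw [Matrix.SpecialLinearGroup.coe_inv, adjugate_fin_two]
      simpa [ModularGroup.S] using good_S_inv
    · refine ⟨good_T, ?_⟩
      rw [Matrix.SpecialLinearGroup.coe_inv, adjugate_fin_two]
      simpa [ModularGroup.T] using good_T_inv
  | one => simpa using good_one
  | mul x y _ _ hx hy =>
    refine ⟨by simpa using hx.1.mul hy.1, ?_⟩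
    rw [_root_.mul_inv_rev]
    exact hy.2.mul hx.2
  | inv x _ hx => exact ⟨hx.2, by rw [inv_inv]; exact hx.1⟩

/-- Every element of `SL(2,ℤ)` can be written in the form `M(a₁,...,aₙ)` with all `aᵢ` positive. -/
theorem surjective_M (A : Matrix (Fin 2) (Fin 2) ℤ) (hA : A.det = 1) :
    ∃ l : List ℤ, l ≠ [] ∧ (∀ x ∈ l, 0 < x) ∧ M l = A :=
  (good_SL ⟨A, hA⟩).1
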